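/- Let R be a finite-dimensional unital associative ℂ-algebra. The set of regular elements of R[X] (elements that are neither left nor right zero divisors) is a multiplicative set satisfying both the left and the right Ore condition: for every regular s ∈ R[X] and every a ∈ R[X] there exist a regular t ∈ R[X] and b ∈ R[X] with t·a = b·s, and likewise there exist a regular t′ ∈ R[X] and b′ ∈ R[X] with a·t′ = s·b′. -/

import Mathlib

/-!
The ring `R[X]` is a finite module over the central image of `ℂ[X]`, so every `s ∈ R[X]` satisfies
a monic polynomial equation over `ℂ[X]`. When `s` is regular, powers of `s` can be cancelled from
that equation until its constant term is nonzero, and the equation then exhibits a nonzero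
`c ∈ ℂ[X]` as a two-sided multiple `c = r * s = s * r` (`exists_central_multiple`). Since `c` is
central in `R[X]`, and regular because its leading coefficient is a nonzero scalar, it serves as
the Ore denominator on both sides: `c * a = (a * r) * s` and `a * c = s * (r * a)`.
-/

/-- An element of a ring is *regular* if it is neither a left zero divisor nor
a right zero divisor. -/
def IsRegularElem {A : Type*} [Ring A] (a : A) : Prop :=
  (∀ b : A, a * b = 0 → b = 0) ∧ (∀ b : A, b * a = 0 → b = 0)

open Polynomial

theorem finite_polynomial_of_finite (R : Type*) [Ring R] [Algebra ℂ R] [FiniteDimensional ℂ R] :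
    letI := Polynomial.algebra ℂ R
    Module.Finite ℂ[X] R[X] := by
  let := Polynomial.algebra ℂ R
  obtain ⟨S, hS⟩ := Module.Finite.fg_top (R := ℂ) (M := R)
  classical
  refine ⟨⟨S.image C, ?_⟩⟩
  rw [eq_top_iff]
  rintro p -
  -- Scalars act on constants through `ℂ ⊆ ℂ[X]`, so a `ℂ`-spanning set of `R` captures all of `R`.
  have hC : ∀ r : R, C r ∈ Submodule.span ℂ[X] (S.image C : Set R[X]) := by
    intro r
    have hr : r ∈ Submodule.span ℂ (S : Set R) := by rw [hS]; trivial
    induction hr using Submodule.span_induction with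
    | mem x hx => exact Submodule.subset_span (by simpa using hx)
    | zero => simp
    | add x y _ _ hx hy => simpa using add_mem hx hy
    | smul z x _ hx =>
      have h : C (z • x) = (C z : ℂ[X]) • C x := by
        simp [Algebra.smul_def]
      rw [h]
      exact Submodule.smul_mem _ _ hx
  induction p using Polynomial.induction_on' with
  | add p q hp hq => exact add_mem hp hq
  | monomial n r =>
    have h : monomial n r = (X ^ n : ℂ[X]) • C r := by
      simp [Algebra.smul_def, ← C_mul_X_pow_eq_monomial]
    rw [h]
    exact Submodule.smul_mem _ _ (hC r)

/-- A nonzero complex polynomial stays regular in `R[X]`: up to a nonzero scalar it is monic. -/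
theorem isRegularElem_map (R : Type*) [Ring R] [Algebra ℂ R] {c : ℂ[X]} (hc : c ≠ 0) :
    IsRegularElem (c.map (algebraMap ℂ R)) := by
  have hreg := ((monic_mul_leadingCoeff_inv hc).map (algebraMap ℂ R)).isRegular
  rw [Polynomial.map_mul] at hreg
  have hcomm : c.map (algebraMap ℂ R) * (C c.leadingCoeff⁻¹).map (algebraMap ℂ R) =
      (C c.leadingCoeff⁻¹).map (algebraMap ℂ R) * c.map (algebraMap ℂ R) := by
    rw [← Polynomial.map_mul, ← Polynomial.map_mul, mul_comm]
  constructor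
  · intro b hb
    apply hreg.left
    dsimp only
    rw [hcomm, mul_assoc, hb, mul_zero, mul_zero]
  · intro b hb
    apply hreg.right
    dsimp only
    rw [← mul_assoc, hb, zero_mul, zero_mul]

/-- A regular element of an algebra over a commutative ring that satisfies a nonzero polynomial
equation satisfies one with nonzero constant term. -/
theorem exists_aeval_eq_zero_coeff_zero_ne_zero {K A : Type*} [CommRing K] [Ring A]
    [Algebra K A] {s : A} (hs : IsRegularElem s) (p : K[X]) (hp : p ≠ 0) (h : aeval s p = 0) :
    ∃ q : K[X], q.coeff 0 ≠ 0 ∧ aeval s q = 0 := by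
  obtain ⟨q, hpq, hq⟩ := exists_eq_pow_rootMultiplicity_mul_and_not_dvd p hp 0
  rw [C_0, sub_zero] at hpq hq
  refine ⟨q, fun h0 => hq (X_dvd_iff.mpr h0), ?_⟩
  rw [hpq, map_mul, map_pow, aeval_X] at h
  generalize rootMultiplicity 0 p = n at h
  induction n with
  | zero => simpa using h
  | succ n ih =>
    rw [pow_succ', mul_assoc] at h
    exact ih (hs.1 _ h)

/-- Every regular element of `R[X]` divides a nonzero element of `ℂ[X]` on both sides, with the
same cofactor. -/
theorem exists_central_multiple {R : Type*} [Ring R] [Algebra ℂ R] [FiniteDimensional ℂ R]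
    {s : R[X]} (hs : IsRegularElem s) :
    ∃ (c : ℂ[X]) (r : R[X]), c ≠ 0 ∧
      c.map (algebraMap ℂ R) = r * s ∧ c.map (algebraMap ℂ R) = s * r := by
  let := Polynomial.algebra ℂ R
  have := finite_polynomial_of_finite R
  obtain ⟨p, hp, hps⟩ := IsIntegral.of_finite ℂ[X] s
  obtain ⟨q, hq0, hq⟩ := exists_aeval_eq_zero_coeff_zero_ne_zero hs p hp.ne_zero hps
  have h1 := hq
  rw [← divX_mul_X_add q, map_add, map_mul, aeval_X, aeval_C] at h1
  have h2 : s * aeval s q.divX = aeval s q.divX * s := by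
    simpa only [map_mul, aeval_X] using congrArg (aeval s) (mul_comm X q.divX)
  have h3 : (q.coeff 0).map (algebraMap ℂ R) = -(aeval s q.divX * s) :=
    eq_neg_of_add_eq_zero_right h1
  refine ⟨q.coeff 0, -aeval s q.divX, hq0, ?_, ?_⟩
  · rw [h3, neg_mul]
  · rw [h3, mul_neg, h2]


/-- Let `R` be a finite-dimensional unital associative `ℂ`-algebra.
The set of regular elements of `R[X]` is a multiplicative set satisfying both the left and the
right Ore condition: for every regular `s ∈ R[X]` and every `a ∈ R[X]` there exist a regular
`t ∈ R[X]` and `b ∈ R[X]` with `t·a = b·s`, and likewise there exist a regular `t′ ∈ R[X]` and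
`b′ ∈ R[X]` with `a·t′ = s·b′`. -/
theorem regular_ore_of_finiteDimensional
    (R : Type*) [Ring R] [Algebra ℂ R] [FiniteDimensional ℂ R] :
    IsRegularElem (1 : Polynomial R) ∧
    (∀ a b : Polynomial R, IsRegularElem a → IsRegularElem b → IsRegularElem (a * b)) ∧
    (∀ s a : Polynomial R, IsRegularElem s →
      ∃ (t b : Polynomial R), IsRegularElem t ∧ t * a = b * s) ∧
    (∀ s a : Polynomial R, IsRegularElem s →
      ∃ (t' b' : Polynomial R), IsRegularElem t' ∧ a * t' = s * b') := by
  have hcentral : ∀ (c : ℂ[X]) (a : R[X]),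
      c.map (algebraMap ℂ R) * a = a * c.map (algebraMap ℂ R) := by
    let := Polynomial.algebra ℂ R
    exact fun c a => Algebra.commutes c a
  refine ⟨⟨by simp, by simp⟩, fun a b ha hb => ⟨fun x hx => ?_, fun x hx => ?_⟩,
    fun s a hs => ?_, fun s a hs => ?_⟩
  · rw [mul_assoc] at hx
    exact hb.1 _ (ha.1 _ hx)
  · rw [← mul_assoc] at hx
    exact ha.2 _ (hb.2 _ hx)
  · obtain ⟨c, r, hc, hrs, -⟩ := exists_central_multiple hs
    exact ⟨_, a * r, isRegularElem_map R hc, by rw [hcentral, hrs, mul_assoc]⟩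
  · obtain ⟨c, r, hc, -, hsr⟩ := exists_central_multiple hs
    exact ⟨_, r * a, isRegularElem_map R hc, by rw [← hcentral, hsr, mul_assoc]⟩
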